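/- Let G be a finite bipartite graph with color classes A and B, and b : V(G) → ℕ. A set Z ⊆ V(G) is a b-verifying set if and only if there exists a complementary pair of a normalized lower ideal I_A and a normalized upper ideal I_B of the poset of b-flexible components under ⪯_A (i.e., I_A and I_B are disjoint and their union is the set of all b-flexible components) such that Z = Z_A ∪ Z_B and Z_A ∩ Z_B = ∅, where Z_A = ⋃_{C ∈ I_A} (V(C) ∩ A) and Z_B = ⋃_{C ∈ I_B} (V(C) ∩ B). -/

import Mathlib

open scoped symmDiff

variable {V : Type} [Fintype V]

/-- `G` is bipartite with color classes `A` and `B`. -/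
structure Bipartition (G : SimpleGraph V) (A B : Set V) : Prop where
  disjoint : Disjoint A B
  cover : A ∪ B = Set.univ
  between : ∀ ⦃u v : V⦄, G.Adj u v → (u ∈ A ∧ v ∈ B) ∨ (u ∈ B ∧ v ∈ A)

/-- `M` is a `b`-matching of `G`: a set of edges of `G` such that each vertex `v` is
incident to at most `b v` edges of `M`. -/
def IsBMatching (G : SimpleGraph V) (b : V → ℕ) (M : Set (Sym2 V)) : Prop :=
  M ⊆ G.edgeSet ∧ ∀ v : V, {e ∈ M | v ∈ e}.ncard ≤ b v

/-- `M` is a maximum `b`-matching of `G`. -/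
def IsMaxBMatching (G : SimpleGraph V) (b : V → ℕ) (M : Set (Sym2 V)) : Prop :=
  IsBMatching G b M ∧ ∀ N : Set (Sym2 V), IsBMatching G b N → N.ncard ≤ M.ncard

/-- `E[X]`: the set of edges of `G` with both ends in `X`. -/
def edgesIn (G : SimpleGraph V) (X : Set V) : Set (Sym2 V) :=
  {e ∈ G.edgeSet | ∀ v ∈ e, v ∈ X}

/-- `b(X) = ∑_{v ∈ X} b v`. -/
noncomputable def bSum (b : V → ℕ) (X : Set V) : ℕ := ∑ᶠ v ∈ X, b v

/-- `Z` is a `b`-verifying set: `b(Zᶜ) + |E[Z]|` equals the size of a maximum `b`-matching. -/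
def IsVerifying (G : SimpleGraph V) (b : V → ℕ) (Z : Set V) : Prop :=
  ∃ M : Set (Sym2 V), IsMaxBMatching G b M ∧ bSum b Zᶜ + (edgesIn G Z).ncard = M.ncard

/-- `v` is `M`-tight. -/
def IsTight (b : V → ℕ) (M : Set (Sym2 V)) (v : V) : Prop :=
  {e ∈ M | v ∈ e}.ncard = b v

/-- `v` is `M`-loose. -/
def IsLoose (b : V → ℕ) (M : Set (Sym2 V)) (v : V) : Prop :=
  {e ∈ M | v ∈ e}.ncard < b v

/-- `M` is a perfect `b`-matching. -/
def IsPerfect (G : SimpleGraph V) (b : V → ℕ) (M : Set (Sym2 V)) : Prop :=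
  IsBMatching G b M ∧ ∀ v : V, IsTight b M v

/-- An edge is `b`-inevitable if it is an edge of `G` contained in every maximum `b`-matching. -/
def IsInevitable (G : SimpleGraph V) (b : V → ℕ) (e : Sym2 V) : Prop :=
  e ∈ G.edgeSet ∧ ∀ M : Set (Sym2 V), IsMaxBMatching G b M → e ∈ M

/-- An edge is `b`-forbidden if it is an edge of `G` contained in no maximum `b`-matching. -/
def IsForbidden (G : SimpleGraph V) (b : V → ℕ) (e : Sym2 V) : Prop :=
  e ∈ G.edgeSet ∧ ∀ M : Set (Sym2 V), IsMaxBMatching G b M → e ∉ M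

/-- An edge is `b`-flexible if some maximum `b`-matching contains it and some does not. -/
def IsFlexibleEdge (G : SimpleGraph V) (b : V → ℕ) (e : Sym2 V) : Prop :=
  (∃ M : Set (Sym2 V), IsMaxBMatching G b M ∧ e ∈ M) ∧
  (∃ M : Set (Sym2 V), IsMaxBMatching G b M ∧ e ∉ M)

/-- The spanning subgraph of `G` whose edges are the `b`-flexible edges. -/
def flexGraph (G : SimpleGraph V) (b : V → ℕ) : SimpleGraph V where
  Adj u v := IsFlexibleEdge G b s(u, v)
  symm := by
    constructor
    intro u v h
    rwa [Sym2.eq_swap] at h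
  loopless := by
    constructor
    intro v h
    obtain ⟨⟨M, hM, heM⟩, -⟩ := h
    exact G.loopless.irrefl v ((G.mem_edgeSet).mp (hM.1.1 heM))

/-- A `b`-flexible component of `G`, identified with the corresponding connected
component of the spanning subgraph of flexible edges. -/
abbrev FlexComp (G : SimpleGraph V) (b : V → ℕ) := (flexGraph G b).ConnectedComponent

/-- `D(G;b)`: the set of vertices that are `M`-loose for some maximum `b`-matching `M`. -/
def Dset (G : SimpleGraph V) (b : V → ℕ) : Set V :=
  {v | ∃ M : Set (Sym2 V), IsMaxBMatching G b M ∧ IsLoose b M v}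

/-- `c` is a `b`-loose flexible component. -/
def LooseComp (G : SimpleGraph V) (b : V → ℕ) (c : FlexComp G b) : Prop :=
  ∃ v ∈ c.supp, v ∈ Dset G b

/-- `c` is a `b`-inactive flexible component. -/
def InactiveComp (G : SimpleGraph V) (b : V → ℕ) (c : FlexComp G b) : Prop :=
  ∃ v, c.supp = {v} ∧ b v = 0

/-- `c` is a `b`-inconsistent flexible component. -/
def InconsistentComp (G : SimpleGraph V) (b : V → ℕ) (c : FlexComp G b) : Prop :=
  LooseComp G b c ∨ ∃ v, c.supp = {v} ∧ b v = 0 ∧ ∃ u ∈ Dset G b, G.Adj v u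

/-- `c` is a `b`-consistent flexible component. -/
def ConsistentComp (G : SimpleGraph V) (b : V → ℕ) (c : FlexComp G b) : Prop :=
  ¬ InconsistentComp G b c

/-- `c` is a `b`-loose flexible component hooked up by the color class `W`. -/
def LooseHooked (G : SimpleGraph V) (b : V → ℕ) (W : Set V) (c : FlexComp G b) : Prop :=
  ∃ v ∈ c.supp ∩ W, v ∈ Dset G b

/-- `c` is a `b`-inactive flexible component hooked up by the color class `W`. -/
def InactiveHooked (G : SimpleGraph V) (b : V → ℕ) (W : Set V) (c : FlexComp G b) : Prop :=
  ∃ v, c.supp = {v} ∧ b v = 0 ∧ ∃ u ∈ Dset G b ∩ W, G.Adj v u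

/-- `c` is a `b`-inconsistent flexible component hooked up by the color class `W`. -/
def HookedUp (G : SimpleGraph V) (b : V → ℕ) (W : Set V) (c : FlexComp G b) : Prop :=
  LooseHooked G b W c ∨ InactiveHooked G b W c

/-- `X` is separating: empty or a union of vertex sets of `b`-flexible components. -/
def IsSeparating (G : SimpleGraph V) (b : V → ℕ) (X : Set V) : Prop :=
  ∃ S : Set (FlexComp G b), X = ⋃ c ∈ S, c.supp

/-- The number of edges in the list `es` incident to `v` that lie in `M`. -/
noncomputable def edgeDeg (es : List (Sym2 V)) (M : Set (Sym2 V)) (v : V) : ℕ :=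
  {e : Sym2 V | e ∈ es ∧ v ∈ e ∧ e ∈ M}.ncard

/-- `p` is an `M`-wedge path from `x` to `y`. -/
def IsWedgePath {G : SimpleGraph V} (M : Set (Sym2 V)) {x y : V} (p : G.Walk x y) : Prop :=
  p.IsPath ∧ (∀ v ∈ p.support, v ≠ y → edgeDeg p.edges M v = 1) ∧ edgeDeg p.edges M y = 0

/-- `p` is an `M`-saturated path between `x` and `y`. -/
def IsSaturatedPath {G : SimpleGraph V} (M : Set (Sym2 V)) {x y : V} (p : G.Walk x y) : Prop :=
  p.IsPath ∧ ∀ v ∈ p.support, edgeDeg p.edges M v = 1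

/-- `p` is an `M`-exposed path between `x` and `y`. -/
def IsExposedPath {G : SimpleGraph V} (M : Set (Sym2 V)) {x y : V} (p : G.Walk x y) : Prop :=
  p.IsPath ∧ ∀ v ∈ p.support, edgeDeg p.edges Mᶜ v = 1

/-- `p` is an `(M; A, B)`-ascending path from `u` to `v`. -/
def IsAscending {G : SimpleGraph V} (A B : Set V) (M : Set (Sym2 V)) {u v : V}
    (p : G.Walk u v) : Prop :=
  (u ∈ A → v ∈ A → IsWedgePath M p) ∧
  (u ∈ A → v ∈ B → IsSaturatedPath M p) ∧
  (u ∈ B → v ∈ A → IsExposedPath M p) ∧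
  (u ∈ B → v ∈ B → IsWedgePath M p.reverse)

/-- The one-step relation `⊴_A` on `b`-flexible components: `c₁ ⊴_A c₂` iff `c₁ = c₂`, or
there is a `b`-inevitable edge between `V(c₁) ∩ A` and `V(c₂) ∩ B`, or a `b`-forbidden edge
between `V(c₂) ∩ A` and `V(c₁) ∩ B`. -/
def StepRel (G : SimpleGraph V) (b : V → ℕ) (A B : Set V) (c₁ c₂ : FlexComp G b) : Prop :=
  c₁ = c₂ ∨
  (∃ u ∈ c₁.supp ∩ A, ∃ v ∈ c₂.supp ∩ B, IsInevitable G b s(u, v)) ∨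
  (∃ u ∈ c₂.supp ∩ A, ∃ v ∈ c₁.supp ∩ B, IsForbidden G b s(u, v))

/-- The one-step relation `⊴_A` restricted to `b`-consistent flexible components. -/
def ConsStepRel (G : SimpleGraph V) (b : V → ℕ) (A B : Set V) (c₁ c₂ : FlexComp G b) : Prop :=
  ConsistentComp G b c₁ ∧ ConsistentComp G b c₂ ∧ StepRel G b A B c₁ c₂

/-- `I` is a lower ideal of the relation `r`. -/
def IsLowerIdeal {α : Type*} (r : α → α → Prop) (I : Set α) : Prop :=
  ∀ ⦃c d : α⦄, d ∈ I → r c d → c ∈ I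

/-- `I` is an upper ideal of the relation `r`. -/
def IsUpperIdeal {α : Type*} (r : α → α → Prop) (I : Set α) : Prop :=
  ∀ ⦃c d : α⦄, c ∈ I → r c d → d ∈ I

theorem aux_count (G : SimpleGraph V) (M : Set (Sym2 V)) (hM : M ⊆ G.edgeSet) (Z : Set V) :
    (∑ᶠ v ∈ Zᶜ, {e ∈ M | v ∈ e}.ncard) + (M ∩ edgesIn G Z).ncard
      = M.ncard + (M ∩ edgesIn G Zᶜ).ncard := by
  classical
  have h1 : (∑ᶠ v ∈ Zᶜ, {e ∈ M | v ∈ e}.ncard)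
      = ∑ v ∈ Finset.univ.filter (fun v => v ∉ Z),
          (M.toFinset.filter (fun e => v ∈ e)).card := by
    rw [finsum_mem_eq_sum_of_inter_support_eq (t := Finset.univ.filter (fun v => v ∉ Z))]
    · refine Finset.sum_congr rfl fun v _ => ?_
      rw [← Set.ncard_coe_finset]
      congr 1
      ext e
      simp
    · ext v
      simp
  have h2 : ∑ v ∈ Finset.univ.filter (fun v => v ∉ Z),
          (M.toFinset.filter (fun e => v ∈ e)).card
      = ∑ e ∈ M.toFinset, ((Finset.univ.filter (fun v => v ∉ Z)).filter (fun v => v ∈ e)).card :=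
    Finset.sum_card_bipartiteAbove_eq_sum_card_bipartiteBelow (fun v e => v ∈ e)
  have h3 : ∀ X : Set V, (M ∩ edgesIn G X).ncard
      = ∑ e ∈ M.toFinset, if (∀ v ∈ e, v ∈ X) then 1 else 0 := by
    intro X
    rw [← Finset.card_filter, ← Set.ncard_coe_finset]
    congr 1
    ext e
    simp only [edgesIn, Set.mem_inter_iff, Set.mem_setOf_eq, Finset.coe_filter, Set.mem_toFinset]
    exact ⟨fun h => ⟨h.1, h.2.2⟩, fun h => ⟨h.1, hM h.1, h.2⟩⟩
  rw [h1, h2, h3, h3, Set.ncard_eq_toFinset_card' M, Finset.card_eq_sum_ones,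
    ← Finset.sum_add_distrib, ← Finset.sum_add_distrib]
  refine Finset.sum_congr rfl fun e he => ?_
  have heG : e ∈ G.edgeSet := hM (by simpa using he)
  induction e with
  | _ u v =>
    have huv : u ≠ v := G.ne_of_adj heG
    by_cases hu : u ∈ Z <;> by_cases hv : v ∈ Z
    · have : ((Finset.univ.filter (fun v => v ∉ Z)).filter (fun x => x ∈ s(u, v))) = ∅ := by
        ext x; simp; grind
      rw [this]; simp [hu, hv]
    · have : ((Finset.univ.filter (fun v => v ∉ Z)).filter (fun x => x ∈ s(u, v))) = {v} := by
        ext x; simp; grind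
      rw [this]; simp [hu, hv]
    · have : ((Finset.univ.filter (fun v => v ∉ Z)).filter (fun x => x ∈ s(u, v))) = {u} := by
        ext x; simp; grind
      rw [this]; simp [hu, hv]
    · have : ((Finset.univ.filter (fun v => v ∉ Z)).filter (fun x => x ∈ s(u, v))) = {u, v} := by
        ext x; simp; grind
      rw [this, Finset.card_pair huv]; simp [hu, hv]

theorem aux_verif (G : SimpleGraph V) (b : V → ℕ) (M : Set (Sym2 V)) (hM : IsBMatching G b M)
    (Z : Set V) :
    bSum b Zᶜ + (edgesIn G Z).ncard = M.ncard ↔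
      (∀ v, v ∉ Z → ¬ IsLoose b M v) ∧ edgesIn G Z ⊆ M ∧ ∀ e ∈ M, e ∉ edgesIn G Zᶜ := by
  classical
  have hc := aux_count G M hM.1 Z
  have hs : ∀ f : V → ℕ, (∑ᶠ v ∈ Zᶜ, f v) = ∑ v ∈ Finset.univ.filter (fun v => v ∉ Z), f v := by
    intro f
    rw [finsum_mem_eq_sum_of_inter_support_eq (t := Finset.univ.filter (fun v => v ∉ Z))]
    ext v
    simp
  rw [hs] at hc
  unfold bSum
  rw [hs]
  have hle : ∀ v ∈ Finset.univ.filter (fun v => v ∉ Z), {e ∈ M | v ∈ e}.ncard ≤ b v :=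
    fun v _ => hM.2 v
  have hle' := Finset.sum_le_sum hle
  have hin : (M ∩ edgesIn G Z).ncard ≤ (edgesIn G Z).ncard :=
    Set.ncard_le_ncard Set.inter_subset_right (Set.toFinite _)
  constructor
  · intro h
    have e1 : (M ∩ edgesIn G Zᶜ).ncard = 0 := by omega
    have e2 : (edgesIn G Z).ncard ≤ (M ∩ edgesIn G Z).ncard := by omega
    have e3 := (Finset.sum_eq_sum_iff_of_le hle).1 (by omega)
    refine ⟨fun v hv hl => ?_, ?_, ?_⟩
    · have := e3 v (by simpa using hv)
      unfold IsLoose at hl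
      omega
    · have := Set.eq_of_subset_of_ncard_le Set.inter_subset_right e2 (Set.toFinite _)
      exact Set.inter_eq_right.1 this
    · rw [Set.ncard_eq_zero (Set.toFinite _)] at e1
      intro e he he'
      have : e ∈ M ∩ edgesIn G Zᶜ := ⟨he, he'⟩
      rw [e1] at this
      exact this
  · rintro ⟨h1, h2, h3⟩
    have e1 : M ∩ edgesIn G Zᶜ = ∅ := by
      ext e
      simp only [Set.mem_inter_iff, Set.mem_empty_iff_false, iff_false]
      exact fun h => h3 e h.1 h.2
    rw [e1, Set.inter_eq_right.2 h2, Set.ncard_empty] at hc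
    have e3 := (Finset.sum_eq_sum_iff_of_le hle).2 (fun v hv => by
      have := h1 v (by simpa using hv)
      unfold IsLoose at this
      have := hM.2 v
      omega)
    omega

theorem aux_exists_max (G : SimpleGraph V) (b : V → ℕ) : ∃ M, IsMaxBMatching G b M := by
  classical
  obtain ⟨M, hM, hmax⟩ := Set.exists_max_image {M : Set (Sym2 V) | IsBMatching G b M}
    (fun M => M.ncard) (Set.toFinite _) ⟨∅, by simp [IsBMatching]⟩
  exact ⟨M, hM, fun N hN => hmax N hN⟩

theorem aux_verifying_iff (G : SimpleGraph V) (b : V → ℕ) (Z : Set V) :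
    IsVerifying G b Z ↔
      (Dset G b ⊆ Z ∧ (∀ e ∈ edgesIn G Z, IsInevitable G b e) ∧
        ∀ e ∈ edgesIn G Zᶜ, IsForbidden G b e) := by
  constructor
  · rintro ⟨M, hM, h⟩
    have key : ∀ N, IsMaxBMatching G b N → _ := fun N hN =>
      (aux_verif G b N hN.1 Z).1 (h.trans (le_antisymm (hN.2 M hM.1) (hM.2 N hN.1)))
    refine ⟨?_, fun e he => ⟨he.1, fun N hN => (key N hN).2.1 he⟩,
      fun e he => ⟨he.1, fun N hN h' => (key N hN).2.2 e h' he⟩⟩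
    rintro v ⟨N, hN, hl⟩
    by_contra hv
    exact (key N hN).1 v hv hl
  · rintro ⟨h1, h2, h3⟩
    obtain ⟨M, hM⟩ := aux_exists_max G b
    refine ⟨M, hM, (aux_verif G b M hM.1 Z).2 ⟨fun v hv hl => hv (h1 ⟨M, hM, hl⟩),
      fun e he => (h2 e he).2 M hM, fun e he he' => (h3 e he').2 M hM he⟩⟩

theorem aux_edge_cases (G : SimpleGraph V) (b : V → ℕ) (e : Sym2 V) (he : e ∈ G.edgeSet) :
    IsInevitable G b e ∨ IsForbidden G b e ∨ IsFlexibleEdge G b e := by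
  by_cases h1 : ∀ M, IsMaxBMatching G b M → e ∈ M
  · exact Or.inl ⟨he, h1⟩
  by_cases h2 : ∀ M, IsMaxBMatching G b M → e ∉ M
  · exact Or.inr (Or.inl ⟨he, h2⟩)
  push Not at h1 h2
  exact Or.inr (Or.inr ⟨h2, h1⟩)

theorem aux_not_both (G : SimpleGraph V) (b : V → ℕ) (e : Sym2 V)
    (h1 : IsInevitable G b e) (h2 : IsForbidden G b e) : False := by
  obtain ⟨M, hM⟩ := aux_exists_max G b
  exact h2.2 M hM (h1.2 M hM)

theorem aux_mem_edgesIn (G : SimpleGraph V) (X : Set V) (u v : V) :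
    s(u, v) ∈ edgesIn G X ↔ G.Adj u v ∧ u ∈ X ∧ v ∈ X := by
  simp [edgesIn]

theorem aux_zero_forbidden (G : SimpleGraph V) (b : V → ℕ) (v : V) (hv : b v = 0)
    (e : Sym2 V) (he : e ∈ G.edgeSet) (hve : v ∈ e) : IsForbidden G b e := by
  refine ⟨he, fun M hM heM => ?_⟩
  have := hM.1.2 v
  rw [hv, Nat.le_zero, Set.ncard_eq_zero (Set.toFinite _)] at this
  have h : e ∈ {e ∈ M | v ∈ e} := ⟨heM, hve⟩
  rw [this] at h
  exact h

theorem aux_flex_adj {G : SimpleGraph V} {b : V → ℕ} {u v : V} (h : IsFlexibleEdge G b s(u, v)) :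
    (flexGraph G b).connectedComponentMk u = (flexGraph G b).connectedComponentMk v :=
  SimpleGraph.ConnectedComponent.connectedComponentMk_eq_of_adj
    (show (flexGraph G b).Adj u v from h)

/-- A vertex is on the `A` side of `Z`. -/
def auxSide (A Z : Set V) (v : V) : Prop := (v ∈ A ↔ v ∈ Z)

theorem aux_side_const (G : SimpleGraph V) (A B : Set V) (hG : Bipartition G A B) (b : V → ℕ)
    (Z : Set V) (hZ1 : ∀ e ∈ edgesIn G Z, IsInevitable G b e)
    (hZ2 : ∀ e ∈ edgesIn G Zᶜ, IsForbidden G b e) (u v : V)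
    (h : (flexGraph G b).connectedComponentMk u = (flexGraph G b).connectedComponentMk v) :
    auxSide A Z u ↔ auxSide A Z v := by
  have hr := SimpleGraph.ConnectedComponent.exact h
  rw [SimpleGraph.reachable_iff_reflTransGen] at hr
  induction hr with
  | refl => rfl
  | @tail x y hx hxy ih =>
    refine Iff.trans (ih (SimpleGraph.ConnectedComponent.sound
      ((SimpleGraph.reachable_iff_reflTransGen _ _).2 hx))) ?_
    have hf : IsFlexibleEdge G b s(x, y) := hxy
    have hadj : G.Adj x y := by
      obtain ⟨⟨M, hM, heM⟩, -⟩ := hf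
      exact hM.1.1 heM
    have n1 : ¬ (x ∈ Z ∧ y ∈ Z) := fun hh => by
      obtain ⟨-, M, hM, hn⟩ := hf
      exact hn ((hZ1 _ ((aux_mem_edgesIn G Z x y).2 ⟨hadj, hh⟩)).2 M hM)
    have n2 : ¬ (x ∉ Z ∧ y ∉ Z) := fun hh => by
      obtain ⟨⟨M, hM, hn⟩, -⟩ := hf
      exact (hZ2 _ ((aux_mem_edgesIn G Zᶜ x y).2 ⟨hadj, hh⟩)).2 M hM hn
    have hd : ∀ z, z ∈ A → z ∉ B := fun z h1 h2 => Set.disjoint_left.1 hG.disjoint h1 h2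
    have := hG.between hadj
    have := hd x
    have := hd y
    unfold auxSide
    tauto

/-- `Z` is a `b`-verifying set iff there is a complementary pair of a normalized lower
ideal `I_A` and a normalized upper ideal `I_B` of the poset of `b`-flexible components
under `⪯_A` with `Z = Z_A ∪ Z_B` (disjointly), where `Z_A = ⋃_{C ∈ I_A} V(C) ∩ A` and
`Z_B = ⋃_{C ∈ I_B} V(C) ∩ B`. -/
theorem stmt_18 (G : SimpleGraph V) (A B : Set V) (hG : Bipartition G A B) (b : V → ℕ)
    (Z : Set V) :
    IsVerifying G b Z ↔
      ∃ IA IB : Set (FlexComp G b),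
        IsLowerIdeal (Relation.ReflTransGen (StepRel G b A B)) IA ∧
        IsUpperIdeal (Relation.ReflTransGen (StepRel G b A B)) IB ∧
        (∀ c : FlexComp G b, HookedUp G b A c → c ∈ IA) ∧
        (∀ c : FlexComp G b, HookedUp G b B c → c ∉ IA) ∧
        (∀ c : FlexComp G b, HookedUp G b B c → c ∈ IB) ∧
        (∀ c : FlexComp G b, HookedUp G b A c → c ∉ IB) ∧
        Disjoint IA IB ∧ IA ∪ IB = Set.univ ∧
        Disjoint (⋃ c ∈ IA, c.supp ∩ A) (⋃ c ∈ IB, c.supp ∩ B) ∧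
        Z = (⋃ c ∈ IA, c.supp ∩ A) ∪ (⋃ c ∈ IB, c.supp ∩ B) := by
  have hnA : ∀ z, z ∈ B ↔ z ∉ A := fun z =>
    ⟨fun h1 h2 => Set.disjoint_left.1 hG.disjoint h2 h1, fun h => by
      have : z ∈ A ∪ B := hG.cover ▸ Set.mem_univ z
      exact this.resolve_left h⟩
  rw [aux_verifying_iff]
  constructor
  · rintro ⟨hD, hZ1, hZ2⟩
    have hconst := aux_side_const G A B hG b Z hZ1 hZ2
    set IA : Set (FlexComp G b) := {c | ∀ v ∈ c.supp, auxSide A Z v} with hIA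
    have hmem : ∀ v (c : FlexComp G b), v ∈ c.supp → (c ∈ IA ↔ auxSide A Z v) := by
      intro v c hv
      refine ⟨fun h => h v hv, fun h w hw => ?_⟩
      rw [SimpleGraph.ConnectedComponent.mem_supp_iff] at hv hw
      exact (hconst v w (hv.trans hw.symm)).1 h
    have hstep : ∀ c d, d ∈ IA → StepRel G b A B c d → c ∈ IA := by
      rintro c d hd (rfl | ⟨u, ⟨hu, huA⟩, v, ⟨hv, hvB⟩, he⟩ | ⟨u, ⟨hu, huA⟩, v, ⟨hv, hvB⟩, he⟩)
      · exact hd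
      · rw [hmem v d hv] at hd
        rw [hmem u c hu]
        rw [hnA] at hvB
        by_contra hc
        unfold auxSide at hd hc
        exact aux_not_both G b _ he (hZ2 _ ((aux_mem_edgesIn G Zᶜ u v).2
          ⟨he.1, by simp only [Set.mem_compl_iff]; tauto, by simp only [Set.mem_compl_iff]; tauto⟩))
      · rw [hmem u d hu] at hd
        rw [hmem v c hv]
        rw [hnA] at hvB
        by_contra hc
        unfold auxSide at hd hc
        exact aux_not_both G b _ (hZ1 _ ((aux_mem_edgesIn G Z u v).2
          ⟨he.1, by tauto, by tauto⟩)) he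
    have hlow : ∀ c d, Relation.ReflTransGen (StepRel G b A B) c d → d ∈ IA → c ∈ IA := by
      intro c d h
      induction h with
      | refl => exact id
      | tail _ h2 ih => exact fun hd => ih (hstep _ _ hd h2)
    have hina : ∀ v u, b v = 0 → u ∈ Dset G b → G.Adj v u → v ∉ Z := by
      intro v u hv hu hadj hvZ
      have he : s(v, u) ∈ G.edgeSet := hadj
      exact aux_not_both G b _ (hZ1 _ ((aux_mem_edgesIn G Z v u).2 ⟨hadj, hvZ, hD hu⟩))
        (aux_zero_forbidden G b v hv _ he (by simp))
    have hHA : ∀ c : FlexComp G b, HookedUp G b A c → c ∈ IA := by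
      rintro c (⟨v, ⟨hv, hvA⟩, hvD⟩ | ⟨v, hc, hv, u, ⟨huD, huA⟩, hadj⟩)
      · rw [hmem v c hv]
        exact ⟨fun _ => hD hvD, fun _ => hvA⟩
      · rw [hmem v c (by rw [hc]; rfl)]
        have := hina v u hv huD hadj
        have := hG.between hadj
        have := hnA u
        have := hnA v
        unfold auxSide
        tauto
    have hHB : ∀ c : FlexComp G b, HookedUp G b B c → c ∉ IA := by
      rintro c (⟨v, ⟨hv, hvA⟩, hvD⟩ | ⟨v, hc, hv, u, ⟨huD, huA⟩, hadj⟩)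
      · rw [hmem v c hv]
        have := hD hvD
        have := hnA v
        unfold auxSide
        tauto
      · rw [hmem v c (by rw [hc]; rfl)]
        have := hina v u hv huD hadj
        have := hG.between hadj
        have := hnA u
        have := hnA v
        unfold auxSide
        tauto
    refine ⟨IA, IAᶜ, fun c d hd h => hlow c d h hd, fun c d hc h hd => hc (hlow c d h hd),
      hHA, hHB, hHB, fun c hc h => h (hHA c hc), disjoint_compl_right, Set.union_compl_self _,
      ?_, ?_⟩
    · rw [Set.disjoint_left]
      intro x hx hy
      simp only [Set.mem_iUnion, Set.mem_inter_iff] at hx hy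
      obtain ⟨_, _, _, hx⟩ := hx
      obtain ⟨_, _, _, hy⟩ := hy
      exact (hnA x).1 hy hx
    · ext x
      have hx := hmem x ((flexGraph G b).connectedComponentMk x) rfl
      have := hnA x
      simp only [Set.mem_union, Set.mem_iUnion, Set.mem_inter_iff,
        SimpleGraph.ConnectedComponent.mem_supp_iff, exists_prop, exists_eq_left',
        Set.mem_compl_iff]
      unfold auxSide at hx
      constructor
      · intro hxZ
        by_cases hxA : x ∈ A
        · exact Or.inl ⟨_, by tauto, rfl, hxA⟩
        · exact Or.inr ⟨_, by tauto, rfl, by tauto⟩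
      · rintro (⟨c, hc, rfl, hxA⟩ | ⟨c, hc, rfl, hxB⟩) <;> tauto
  · rintro ⟨IA, IB, hlow, -, hA, -, hB, -, hdis, hcov, -, hZ⟩
    have hIB : ∀ c, c ∈ IB ↔ c ∉ IA := fun c =>
      ⟨fun h1 h2 => Set.disjoint_left.1 hdis h2 h1, fun h => by
        have : c ∈ IA ∪ IB := hcov ▸ Set.mem_univ c
        exact this.resolve_left h⟩
    have hx : ∀ x, x ∈ Z ↔ ((flexGraph G b).connectedComponentMk x ∈ IA ∧ x ∈ A) ∨
        ((flexGraph G b).connectedComponentMk x ∉ IA ∧ x ∉ A) := by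
      intro x
      rw [hZ]
      simp only [Set.mem_union, Set.mem_iUnion, Set.mem_inter_iff,
        SimpleGraph.ConnectedComponent.mem_supp_iff, exists_prop, hnA, hIB]
      constructor
      · rintro (⟨c, hc, rfl, hxA⟩ | ⟨c, hc, rfl, hxB⟩) <;> tauto
      · rintro (⟨hc, hxA⟩ | ⟨hc, hxB⟩)
        · exact Or.inl ⟨_, hc, rfl, hxA⟩
        · exact Or.inr ⟨_, hc, rfl, hxB⟩
    have hp1 : ∀ u v, G.Adj u v → u ∈ A → v ∈ B → u ∈ Z → v ∈ Z →
        IsInevitable G b s(u, v) := by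
      intro u v hadj hu hv huZ hvZ
      rw [hx] at huZ hvZ
      have hvA := (hnA v).1 hv
      have hcu : (flexGraph G b).connectedComponentMk u ∈ IA := by tauto
      have hcv : (flexGraph G b).connectedComponentMk v ∉ IA := by tauto
      rcases aux_edge_cases G b s(u, v) hadj with h | h | h
      · exact h
      · exact absurd (hlow hcu (Relation.ReflTransGen.single
          (Or.inr (Or.inr ⟨u, ⟨rfl, hu⟩, v, ⟨rfl, hv⟩, h⟩)))) hcv
      · rw [aux_flex_adj h] at hcu
        exact absurd hcu hcv
    have hp2 : ∀ u v, G.Adj u v → u ∈ A → v ∈ B → u ∉ Z → v ∉ Z →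
        IsForbidden G b s(u, v) := by
      intro u v hadj hu hv huZ hvZ
      rw [hx] at huZ hvZ
      have hvA := (hnA v).1 hv
      have hcu : (flexGraph G b).connectedComponentMk u ∉ IA := by tauto
      have hcv : (flexGraph G b).connectedComponentMk v ∈ IA := by tauto
      rcases aux_edge_cases G b s(u, v) hadj with h | h | h
      · exact absurd (hlow hcv (Relation.ReflTransGen.single
          (Or.inr (Or.inl ⟨u, ⟨rfl, hu⟩, v, ⟨rfl, hv⟩, h⟩)))) hcu
      · exact h
      · rw [aux_flex_adj h] at hcu
        exact absurd hcv hcu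
    refine ⟨?_, ?_, ?_⟩
    · intro v hv
      rw [hx]
      by_cases hvA : v ∈ A
      · exact Or.inl ⟨hA _ (Or.inl ⟨v, ⟨rfl, hvA⟩, hv⟩), hvA⟩
      · exact Or.inr ⟨(hIB _).1 (hB _ (Or.inl ⟨v, ⟨rfl, (hnA v).2 hvA⟩, hv⟩)), hvA⟩
    · intro e he
      induction e with
      | _ u v =>
        obtain ⟨hadj, hu, hv⟩ := (aux_mem_edgesIn G Z u v).1 he
        rcases hG.between hadj with ⟨h1, h2⟩ | ⟨h1, h2⟩
        · exact hp1 u v hadj h1 h2 hu hv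
        · rw [Sym2.eq_swap]
          exact hp1 v u hadj.symm h2 h1 hv hu
    · intro e he
      induction e with
      | _ u v =>
        obtain ⟨hadj, hu, hv⟩ := (aux_mem_edgesIn G Zᶜ u v).1 he
        rcases hG.between hadj with ⟨h1, h2⟩ | ⟨h1, h2⟩
        · exact hp2 u v hadj h1 h2 hu hv
        · rw [Sym2.eq_swap]
          exact hp2 v u hadj.symm h2 h1 hv hu
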